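/- Let Λ be a finite-dimensional algebra over an algebraically closed field and M, N finite-dimensional Λ-modules. If dim Hom_Λ(U, M) = dim Hom_Λ(U, N) for every finite-dimensional indecomposable Λ-module U, then M ≅ N. -/

import Mathlib

/-- The space `Hom_Λ(U, M)` of `Λ`-linear maps, as a `k`-subspace of `U →ₗ[k] M`. -/
def homLambda (k Λ : Type*) [Field k] [Ring Λ] [Algebra k Λ]
    (U M : Type*) [AddCommGroup U] [Module k U] [Module Λ U] [IsScalarTower k Λ U]
    [AddCommGroup M] [Module k M] [Module Λ M] [IsScalarTower k Λ M]
    [SMulCommClass k Λ M] : Submodule k (U →ₗ[k] M) where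
  carrier := {f | ∀ (a : Λ) (x : U), f (a • x) = a • f x}
  add_mem' := by
    intro f g hf hg a x
    simp [hf a x, hg a x]
  zero_mem' := by intro a x; simp
  smul_mem' := by
    intro c f hf a x
    rw [LinearMap.smul_apply, LinearMap.smul_apply, hf a x, smul_comm]

/-- A module is indecomposable: it is nonzero and admits no nontrivial direct sum
decomposition. -/
def IsIndecomposableModule (A M : Type*) [Ring A] [AddCommGroup M] [Module A M] : Prop :=
  (⊤ : Submodule A M) ≠ ⊥ ∧
    ∀ W₁ W₂ : Submodule A M, W₁ ⊔ W₂ = ⊤ → W₁ ⊓ W₂ = ⊥ → W₁ = ⊥ ∨ W₂ = ⊥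

/-!
Left exactness of `Hom_Λ(-, M)` shows that, once `U ↦ dim Hom_Λ(U, -)` takes the same values on `M`
and `N`, a map `f : W → V` through which every map `W → N` factors has the same property for `M`.
Apply this to `f : M → Nⁿ` whose components span `Hom_Λ(M, N)`: the identity of `M` factors through
`f`, so `M` is a direct summand of `Nⁿ`. An indecomposable summand `X` of `M` has a local
endomorphism ring and is therefore a summand of `N` already. Splitting `X` off both modules keeps
the Hom dimensions equal, and induction on `dim M` finishes the argument.
-/

universe u

section Indecomposable

variable {A M : Type*} [Ring A] [AddCommGroup M] [Module A M]

theorem IsIndecomposableModule.nontrivial (hM : IsIndecomposableModule A M) : Nontrivial M :=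
  (Submodule.nontrivial_iff A).1 ⟨⊤, ⊥, hM.1⟩

/-- Fitting's lemma. -/
theorem IsIndecomposableModule.isUnit_or_isNilpotent [IsNoetherian A M] [IsArtinian A M]
    (hM : IsIndecomposableModule A M) (f : Module.End A M) : IsUnit f ∨ IsNilpotent f := by
  obtain ⟨n, hn, hcompl⟩ := ((Filter.eventually_gt_atTop 0).and
    f.eventually_isCompl_ker_pow_range_pow).exists
  refine (hM.2 _ _ hcompl.sup_eq_top hcompl.inf_eq_bot).imp (fun hker => ?_)
    fun hrange => ⟨n, LinearMap.range_eq_bot.1 hrange⟩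
  have hrange : LinearMap.range (f ^ n) = ⊤ := by simpa [hker] using hcompl.sup_eq_top
  rw [← isUnit_pow_iff hn.ne', Module.End.isUnit_iff]
  exact ⟨LinearMap.ker_eq_bot.1 hker, LinearMap.range_eq_top.1 hrange⟩

theorem IsIndecomposableModule.isLocalRing_end [IsNoetherian A M] [IsArtinian A M]
    (hM : IsIndecomposableModule A M) : IsLocalRing (Module.End A M) :=
  have := hM.nontrivial
  .of_isUnit_or_isUnit_one_sub_self fun f =>
    (hM.isUnit_or_isNilpotent f).imp_right IsNilpotent.isUnit_one_sub

theorem isCompl_sup_right_of_disjoint {α : Type*} [Lattice α] [BoundedOrder α] [IsModularLattice α]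
    {a b c : α} (hab : Disjoint a b) (h : IsCompl (a ⊔ b) c) : IsCompl a (b ⊔ c) :=
  .of_eq (hab.disjoint_sup_right_of_disjoint_sup_left h.disjoint).eq_bot
    (sup_assoc a b c ▸ h.sup_eq_top)

theorem isIndecomposableModule_of_minimal {P : Submodule A M}
    (hP : Minimal (fun Q : Submodule A M => Q ≠ ⊥ ∧ IsComplemented Q) P) :
    IsIndecomposableModule A P := by
  have := Submodule.nontrivial_iff_ne_bot.2 hP.prop.1
  refine ⟨top_ne_bot, fun W₁ W₂ hsup hinf => or_iff_not_imp_left.2 fun hW₁ => ?_⟩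
  have hmap_sup : W₁.map P.subtype ⊔ W₂.map P.subtype = P := by
    rw [← Submodule.map_sup, hsup, Submodule.map_subtype_top]
  have hmap_disjoint : Disjoint (W₁.map P.subtype) (W₂.map P.subtype) := by
    rw [disjoint_iff, ← Submodule.map_inf _ P.injective_subtype, hinf, Submodule.map_bot]
  have hmap_bot (W : Submodule A P) : W.map P.subtype = ⊥ ↔ W = ⊥ :=
    (Submodule.map_injective_of_injective P.injective_subtype).eq_iff' (Submodule.map_bot _)
  obtain ⟨Q, hQ⟩ := hP.prop.2
  have hle : P ≤ W₁.map P.subtype :=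
    hP.le_of_le ⟨mt (hmap_bot W₁).1 hW₁, W₂.map P.subtype ⊔ Q,
      isCompl_sup_right_of_disjoint hmap_disjoint (hmap_sup.symm ▸ hQ)⟩
      (Submodule.map_subtype_le P W₁)
  exact (hmap_bot W₂).1 <|
    disjoint_self.1 (hmap_disjoint.mono_left ((Submodule.map_subtype_le P W₂).trans hle))

theorem exists_isCompl_isIndecomposableModule (A M : Type*) [Ring A] [AddCommGroup M] [Module A M]
    [IsArtinian A M] [Nontrivial M] :
    ∃ P Q : Submodule A M, IsCompl P Q ∧ IsIndecomposableModule A P := by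
  obtain ⟨P, hP⟩ := exists_minimal_of_wellFoundedLT
    (fun Q : Submodule A M => Q ≠ ⊥ ∧ IsComplemented Q) ⟨⊤, top_ne_bot, isComplemented_top⟩
  obtain ⟨Q, hPQ⟩ := hP.prop.2
  exact ⟨P, Q, hPQ, isIndecomposableModule_of_minimal hP⟩

theorem exists_comp_eq_id_of_isLocalRing_end [IsLocalRing (Module.End A M)] {ι : Type*} [Finite ι]
    {N : ι → Type*} [∀ j, AddCommGroup (N j)] [∀ j, Module A (N j)]
    {i : M →ₗ[A] ∀ j, N j} {p : (∀ j, N j) →ₗ[A] M} (hpi : p ∘ₗ i = LinearMap.id) :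
    ∃ (j : ι) (f : M →ₗ[A] N j) (g : N j →ₗ[A] M), g ∘ₗ f = LinearMap.id := by
  classical
  have := Fintype.ofFinite ι
  let e (j : ι) : Module.End A M := (p ∘ₗ LinearMap.single A N j) ∘ₗ (LinearMap.proj j ∘ₗ i)
  have hsum : ∑ j, e j = 1 := by
    ext x
    calc (∑ j, e j) x = p (∑ j, Pi.single j (i x j)) := by simp [e]
      _ = x := by rw [Finset.univ_sum_single]; exact LinearMap.congr_fun hpi x
  obtain ⟨j, -, u, hu⟩ := IsLocalRing.exists_of_isUnit_sum (hsum ▸ isUnit_one)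
  refine ⟨j, LinearMap.proj j ∘ₗ i, (↑u⁻¹ : Module.End A M) ∘ₗ p ∘ₗ LinearMap.single A N j, ?_⟩
  calc (↑u⁻¹ : Module.End A M) * e j = 1 := by rw [← hu, Units.inv_mul]

theorem nonempty_linearEquiv_prod_ker {X : Type*} [AddCommGroup X] [Module A X]
    {f : X →ₗ[A] M} {g : M →ₗ[A] X} (hgf : g ∘ₗ f = LinearMap.id) :
    Nonempty (M ≃ₗ[A] X × LinearMap.ker g) :=
  have e := g.exact_subtype_ker_map.splitSurjectiveEquiv
    (LinearMap.ker g).injective_subtype ⟨f, hgf⟩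
  ⟨e.1.trans (LinearEquiv.prodComm A _ _)⟩

end Indecomposable

section HomSpaces

theorem ker_lcomp_eq_range_lcomp_mkQ (S : Type*) {A V W : Type*} (M : Type*) [Semiring S] [Ring A]
    [AddCommGroup V] [Module A V] [AddCommGroup W] [Module A W]
    [AddCommGroup M] [Module A M] [Module S M] [SMulCommClass A S M] (f : W →ₗ[A] V) :
    LinearMap.ker (LinearMap.lcomp S M f) =
      LinearMap.range (LinearMap.lcomp S M (LinearMap.range f).mkQ) := by
  ext g
  constructor
  · intro hg
    have hle : LinearMap.range f ≤ LinearMap.ker g := LinearMap.range_le_ker_iff.2 hg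
    exact ⟨(LinearMap.range f).liftQ g hle, Submodule.liftQ_mkQ _ _ hle⟩
  · rintro ⟨g, rfl⟩
    rw [LinearMap.mem_ker, LinearMap.lcomp_apply', LinearMap.lcomp_apply', LinearMap.comp_assoc,
      LinearMap.range_mkQ_comp, LinearMap.comp_zero]

theorem exists_lcomp_pi_surjective (S : Type*) {A : Type*} (M N : Type*) [Semiring S] [Ring A]
    [AddCommGroup M] [Module A M] [AddCommGroup N] [Module A N] [Module S N] [SMulCommClass A S N]
    [Module.Finite S (M →ₗ[A] N)] :
    ∃ (n : ℕ) (f : M →ₗ[A] (Fin n → N)), Function.Surjective (LinearMap.lcomp S N f) := by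
  obtain ⟨n, b, hb⟩ := Module.Finite.exists_fin (R := S) (M := M →ₗ[A] N)
  refine ⟨n, LinearMap.pi b, fun g => ?_⟩
  obtain ⟨c, rfl⟩ := (Submodule.mem_span_range_iff_exists_fun S).1 (hb ▸ Submodule.mem_top (x := g))
  exact ⟨∑ i, c i • LinearMap.proj i, by ext; simp⟩

variable {k Λ : Type*} [Field k] [Ring Λ] [Algebra k Λ]

/-- The identification of `homLambda`, whose elements are `k`-linear maps, with Mathlib's type of
`Λ`-linear maps. -/
def homLambdaEquiv (U M : Type*) [AddCommGroup U] [Module k U] [Module Λ U] [IsScalarTower k Λ U]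
    [AddCommGroup M] [Module k M] [Module Λ M] [IsScalarTower k Λ M] :
    homLambda k Λ U M ≃ₗ[k] (U →ₗ[Λ] M) where
  toFun f := { toFun := f.1, map_add' := f.1.map_add, map_smul' := f.2 }
  invFun g := ⟨g.restrictScalars k, g.map_smul⟩
  map_add' _ _ := rfl
  map_smul' _ _ := rfl

theorem finrank_homLambda (U M : Type*)
    [AddCommGroup U] [Module k U] [Module Λ U] [IsScalarTower k Λ U]
    [AddCommGroup M] [Module k M] [Module Λ M] [IsScalarTower k Λ M] :
    Module.finrank k (homLambda k Λ U M) = Module.finrank k (U →ₗ[Λ] M) :=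
  (homLambdaEquiv U M).finrank_eq

variable {U V W M N : Type*} [AddCommGroup U] [Module Λ U] [AddCommGroup V] [Module Λ V]
  [AddCommGroup W] [Module Λ W]
  [AddCommGroup M] [Module k M] [Module Λ M] [IsScalarTower k Λ M]
  [AddCommGroup N] [Module k N] [Module Λ N] [IsScalarTower k Λ N]

instance finiteDimensional_linearMap [Module k U] [IsScalarTower k Λ U] [FiniteDimensional k U]
    [FiniteDimensional k M] : FiniteDimensional k (U →ₗ[Λ] M) :=
  Module.Finite.of_injective (LinearMap.restrictScalarsₗ k Λ U M k)
    (LinearMap.restrictScalars_injective k)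

instance finiteDimensional_submodule [FiniteDimensional k M] (P : Submodule Λ M) :
    FiniteDimensional k P :=
  inferInstanceAs (FiniteDimensional k (P.restrictScalars k))

instance finiteDimensional_quotient [FiniteDimensional k M] (P : Submodule Λ M) :
    FiniteDimensional k (M ⧸ P) :=
  Module.Finite.of_surjective (P.mkQ.restrictScalars k) P.mkQ_surjective

variable (k U) in
theorem finrank_linearMap_congr_right (e : M ≃ₗ[Λ] N) :
    Module.finrank k (U →ₗ[Λ] M) = Module.finrank k (U →ₗ[Λ] N) :=
  (((LinearEquiv.refl Λ U).arrowCongrAddEquiv e).toLinearEquiv fun c f => by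
    ext x; exact LinearMap.map_smul_of_tower (e : M →ₗ[Λ] N) c (f x)).finrank_eq

theorem finrank_linearMap_prod_right [FiniteDimensional k (U →ₗ[Λ] M)]
    [FiniteDimensional k (U →ₗ[Λ] N)] :
    Module.finrank k (U →ₗ[Λ] M × N) =
      Module.finrank k (U →ₗ[Λ] M) + Module.finrank k (U →ₗ[Λ] N) := by
  rw [← (LinearMap.prodEquiv k).finrank_eq, Module.finrank_prod]

theorem finrank_linearMap_prod_left [FiniteDimensional k (U →ₗ[Λ] M)]
    [FiniteDimensional k (V →ₗ[Λ] M)] :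
    Module.finrank k (U × V →ₗ[Λ] M) =
      Module.finrank k (U →ₗ[Λ] M) + Module.finrank k (V →ₗ[Λ] M) := by
  rw [← (LinearMap.coprodEquiv k).finrank_eq, Module.finrank_prod]

variable (k M) in
theorem finrank_range_lcomp_add [FiniteDimensional k (V →ₗ[Λ] M)] (f : W →ₗ[Λ] V) :
    Module.finrank k (LinearMap.range (LinearMap.lcomp k M f)) +
      Module.finrank k ((V ⧸ LinearMap.range f) →ₗ[Λ] M) = Module.finrank k (V →ₗ[Λ] M) := by
  have hinj : Function.Injective (LinearMap.lcomp k M (LinearMap.range f).mkQ) :=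
    (LinearMap.range f).mkQ_surjective.injective_linearMapComp_right
  rw [← LinearMap.finrank_range_of_inj hinj, ← ker_lcomp_eq_range_lcomp_mkQ,
    LinearMap.finrank_range_add_finrank_ker]

variable (k Λ M) in
theorem exists_linearEquiv_indecomposable_prod [FiniteDimensional k M] [Nontrivial M] :
    ∃ X Y : Submodule Λ M, IsIndecomposableModule Λ X ∧
      Module.finrank k Y < Module.finrank k M ∧ Nonempty (M ≃ₗ[Λ] X × Y) := by
  have : IsArtinian Λ M := isArtinian_of_tower k inferInstance
  obtain ⟨X, Y, hXY, hX⟩ := exists_isCompl_isIndecomposableModule Λ M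
  let e := (X.prodEquivOfIsCompl Y hXY).symm
  have hfinrank : Module.finrank k M = Module.finrank k X + Module.finrank k Y := by
    rw [(e.restrictScalars k).finrank_eq, Module.finrank_prod]
  have := hX.nontrivial
  have hX_pos : 0 < Module.finrank k X := Module.finrank_pos
  exact ⟨X, Y, hX, by lia, ⟨e⟩⟩

end HomSpaces

section HomDimEq

/-- The modules `M` and `N` have the same Hom dimensions: `dim Hom_Λ(U, M) = dim Hom_Λ(U, N)` for
every finite-dimensional `Λ`-module `U`, indecomposable or not. The test modules `U` live in the
universe of `M` and `N`. -/
def HomDimEq (k Λ : Type*) [Field k] [Ring Λ] [Algebra k Λ] (M N : Type u)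
    [AddCommGroup M] [Module k M] [Module Λ M] [IsScalarTower k Λ M]
    [AddCommGroup N] [Module k N] [Module Λ N] [IsScalarTower k Λ N] : Prop :=
  ∀ (U : Type u) [AddCommGroup U] [Module k U] [Module Λ U] [IsScalarTower k Λ U]
    [FiniteDimensional k U], Module.finrank k (U →ₗ[Λ] M) = Module.finrank k (U →ₗ[Λ] N)

namespace HomDimEq

variable {k Λ : Type*} [Field k] [Ring Λ] [Algebra k Λ] {M N : Type u}
  [AddCommGroup M] [Module k M] [Module Λ M] [IsScalarTower k Λ M]
  [AddCommGroup N] [Module k N] [Module Λ N] [IsScalarTower k Λ N]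

theorem symm (h : HomDimEq k Λ M N) : HomDimEq k Λ N M :=
  fun U => (h U).symm

theorem congr {M' N' : Type u}
    [AddCommGroup M'] [Module k M'] [Module Λ M'] [IsScalarTower k Λ M']
    [AddCommGroup N'] [Module k N'] [Module Λ N'] [IsScalarTower k Λ N']
    (h : HomDimEq k Λ M N) (eM : M ≃ₗ[Λ] M') (eN : N ≃ₗ[Λ] N') : HomDimEq k Λ M' N' :=
  fun U _ _ _ _ _ => by
    rw [← finrank_linearMap_congr_right k U eM, ← finrank_linearMap_congr_right k U eN, h U]

theorem of_prod_left {X : Type u} [AddCommGroup X] [Module k X] [Module Λ X] [IsScalarTower k Λ X]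
    [FiniteDimensional k X] [FiniteDimensional k M] [FiniteDimensional k N]
    (h : HomDimEq k Λ (X × M) (X × N)) : HomDimEq k Λ M N :=
  fun U _ _ _ _ _ => by
    have hU := h U
    rw [finrank_linearMap_prod_right, finrank_linearMap_prod_right] at hU
    exact Nat.add_left_cancel hU

variable [FiniteDimensional k M] [FiniteDimensional k N]

theorem of_indecomposable
    (h : ∀ (U : Type u) [AddCommGroup U] [Module k U] [Module Λ U] [IsScalarTower k Λ U]
      [FiniteDimensional k U], IsIndecomposableModule Λ U →
      Module.finrank k (U →ₗ[Λ] M) = Module.finrank k (U →ₗ[Λ] N)) :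
    HomDimEq k Λ M N := by
  intro U _ _ _ _ _
  induction hn : Module.finrank k U using Nat.strong_induction_on generalizing U with
  | _ n ih =>
    rcases subsingleton_or_nontrivial U with hU | hU
    · rw [Module.finrank_zero_of_subsingleton, Module.finrank_zero_of_subsingleton]
    obtain ⟨X, Y, hX, hY, ⟨e⟩⟩ := exists_linearEquiv_indecomposable_prod k Λ U
    rw [(e.congrLeft M k).finrank_eq, (e.congrLeft N k).finrank_eq, finrank_linearMap_prod_left,
      finrank_linearMap_prod_left, h X hX, ih _ (hn ▸ hY) Y rfl]

theorem lcomp_surjective (h : HomDimEq k Λ M N) {V W : Type u}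
    [AddCommGroup V] [Module k V] [Module Λ V] [IsScalarTower k Λ V] [FiniteDimensional k V]
    [AddCommGroup W] [Module k W] [Module Λ W] [IsScalarTower k Λ W] [FiniteDimensional k W]
    {f : W →ₗ[Λ] V} (hf : Function.Surjective (LinearMap.lcomp k N f)) :
    Function.Surjective (LinearMap.lcomp k M f) := by
  rw [← LinearMap.range_eq_top] at hf ⊢
  apply Submodule.eq_top_of_finrank_eq
  have hM := finrank_range_lcomp_add k M f
  have hN := finrank_range_lcomp_add k N f
  rw [hf, finrank_top] at hN
  have hV := h V
  have hW := h W
  have hcoker := h (V ⧸ LinearMap.range f)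
  lia

theorem exists_retraction_pi (h : HomDimEq k Λ M N) :
    ∃ (n : ℕ) (i : M →ₗ[Λ] (Fin n → N)) (p : (Fin n → N) →ₗ[Λ] M), p ∘ₗ i = LinearMap.id := by
  obtain ⟨n, i, hi⟩ := exists_lcomp_pi_surjective k (A := Λ) M N
  obtain ⟨p, hp⟩ := h.lcomp_surjective hi LinearMap.id
  exact ⟨n, i, p, hp⟩

theorem subsingleton [Subsingleton M] (h : HomDimEq k Λ M N) : Subsingleton N := by
  obtain ⟨n, i, p, hpi⟩ := h.symm.exists_retraction_pi
  exact Function.Injective.subsingleton (f := i)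
    (Function.LeftInverse.injective (LinearMap.congr_fun hpi))

theorem exists_linearEquiv_prod {X Y : Type u} [AddCommGroup X] [Module k X] [Module Λ X]
    [IsScalarTower k Λ X] [FiniteDimensional k X] [AddCommGroup Y] [Module Λ Y]
    (h : HomDimEq k Λ M N) (hX : IsIndecomposableModule Λ X) (e : M ≃ₗ[Λ] X × Y) :
    ∃ Z : Submodule Λ N, Nonempty (N ≃ₗ[Λ] X × Z) := by
  have : IsArtinian Λ X := isArtinian_of_tower k inferInstance
  have : IsNoetherian Λ X := isNoetherian_of_tower k inferInstance
  have := hX.isLocalRing_end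
  obtain ⟨n, i, p, hpi⟩ := h.exists_retraction_pi
  let i' : X →ₗ[Λ] (Fin n → N) := i ∘ₗ e.symm.toLinearMap ∘ₗ LinearMap.inl Λ X Y
  let p' : (Fin n → N) →ₗ[Λ] X := LinearMap.fst Λ X Y ∘ₗ e.toLinearMap ∘ₗ p
  have hpi' : p' ∘ₗ i' = LinearMap.id := by
    ext x
    have hx : p (i (e.symm (x, 0))) = e.symm (x, 0) := LinearMap.congr_fun hpi _
    simp [p', i', hx]
  obtain ⟨-, f, g, hgf⟩ := exists_comp_eq_id_of_isLocalRing_end hpi'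
  exact ⟨LinearMap.ker g, nonempty_linearEquiv_prod_ker hgf⟩

theorem nonempty_linearEquiv (h : HomDimEq k Λ M N) : Nonempty (M ≃ₗ[Λ] N) := by
  induction hn : Module.finrank k M using Nat.strong_induction_on generalizing M N with
  | _ n ih =>
    rcases subsingleton_or_nontrivial M with hM | hM
    · have := h.subsingleton
      exact ⟨0⟩
    obtain ⟨X, Y, hX, hY, ⟨eM⟩⟩ := exists_linearEquiv_indecomposable_prod k Λ M
    obtain ⟨Z, ⟨eN⟩⟩ := h.exists_linearEquiv_prod hX eM
    obtain ⟨e⟩ := ih _ (hn ▸ hY) (h.congr eM eN).of_prod_left rfl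
    exact ⟨eM.trans (((LinearEquiv.refl Λ X).prodCongr e).trans eN.symm)⟩

end HomDimEq

end HomDimEq

theorem auslander_hom_dim_determines_module_general {k Λ : Type*} [Field k] [Ring Λ] [Algebra k Λ]
    (M N : Type u)
    [AddCommGroup M] [Module k M] [Module Λ M] [IsScalarTower k Λ M] [FiniteDimensional k M]
    [AddCommGroup N] [Module k N] [Module Λ N] [IsScalarTower k Λ N] [FiniteDimensional k N]
    (h : ∀ (U : Type u) [AddCommGroup U] [Module k U] [Module Λ U] [IsScalarTower k Λ U]
      [FiniteDimensional k U], IsIndecomposableModule Λ U →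
      Module.finrank k (U →ₗ[Λ] M) = Module.finrank k (U →ₗ[Λ] N)) :
    Nonempty (M ≃ₗ[Λ] N) :=
  (HomDimEq.of_indecomposable h).nonempty_linearEquiv

/-- (Auslander.)  Let `Λ` be a finite-dimensional algebra over an algebraically closed
field `k` and let `M`, `N` be finite-dimensional `Λ`-modules.  If
`dim Hom_Λ(U, M) = dim Hom_Λ(U, N)` for every finite-dimensional indecomposable
`Λ`-module `U`, then `M ≅ N`. -/
theorem auslander_hom_dim_determines_module {k : Type*} [Field k] [IsAlgClosed k]
    {Λ : Type*} [Ring Λ] [Algebra k Λ] [FiniteDimensional k Λ]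
    (M N : Type) [AddCommGroup M] [Module k M] [Module Λ M] [IsScalarTower k Λ M]
    [SMulCommClass k Λ M] [FiniteDimensional k M]
    [AddCommGroup N] [Module k N] [Module Λ N] [IsScalarTower k Λ N]
    [SMulCommClass k Λ N] [FiniteDimensional k N]
    (h : ∀ (U : Type) [AddCommGroup U] [Module k U] [Module Λ U] [IsScalarTower k Λ U]
      [SMulCommClass k Λ U] [FiniteDimensional k U], IsIndecomposableModule Λ U →
      Module.finrank k (homLambda k Λ U M) = Module.finrank k (homLambda k Λ U N)) :
    Nonempty (M ≃ₗ[Λ] N) := by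
  exact auslander_hom_dim_determines_module_general (k := k) M N fun U _ _ _ _ _ hU =>
    (finrank_homLambda U M).symm.trans ((h U hU).trans (finrank_homLambda U N))
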